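/- Let φ be the endomorphism of the free group F_2 with basis a, b defined by φ(a) = a^{-1} and φ(b) = a^{-1} b^2. Then φ is injective, fix(φ) is the trivial subgroup, and φ has exactly one equivalence class of attracting fixed words, i.e., a(φ) = 1; a representative attracting fixed word is the limit of the iterates φ^p(b^{-1}), namely b^{-2} a b^{-4} a b^{-2} a ⋯. -/

import Mathlib

open Filter

namespace ZZFix

/-- A letter: a basis element together with a sign. -/
abbrev Letter (α : Type*) := α × Bool

/-- The inverse letter. -/
def linv {α : Type*} (l : Letter α) : Letter α := (l.1, !l.2)

/-- An infinite reduced word: a sequence of letters with no adjacent cancellation. -/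
def InfWord (α : Type*) : Type _ := {w : ℕ → Letter α // ∀ i, w (i + 1) ≠ linv (w i)}

/-- The length-`i` prefix of an infinite reduced word, as a list of letters. -/
def prefixList {α : Type*} (W : InfWord α) (i : ℕ) : List (Letter α) :=
  (List.range i).map W.1

/-- The length-`i` prefix of an infinite reduced word, as an element of the free group. -/
def wordPrefix {α : Type*} (W : InfWord α) (i : ℕ) : FreeGroup α :=
  FreeGroup.mk (prefixList W i)

/-- Length of the longest common prefix of two lists. -/
def commonPrefixLength {β : Type*} [DecidableEq β] : List β → List β → ℕ
  | a :: as, b :: bs => if a = b then commonPrefixLength as bs + 1 else 0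
  | _, _ => 0

variable {α : Type*} [DecidableEq α]

/-- `|W ∧ g|` for an infinite reduced word `W` and a finite reduced word `g`. -/
def wedgeF (W : InfWord α) (g : FreeGroup α) : ℕ :=
  commonPrefixLength (prefixList W (FreeGroup.toWord g).length) (FreeGroup.toWord g)

/-- `|g ∧ h|` for finite reduced words. -/
def wedgeFF (g h : FreeGroup α) : ℕ :=
  commonPrefixLength (FreeGroup.toWord g) (FreeGroup.toWord h)

/-- `|W ∧ V|` for infinite reduced words, valued in `ℕ∞` (it is `⊤` iff `W = V`). -/
noncomputable def wedgeI {α : Type*} (W V : InfWord α) : ℕ∞ :=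
  sSup ((fun i : ℕ => (i : ℕ∞)) '' {i : ℕ | prefixList W i = prefixList V i})

/-- A sequence of group elements converges to the infinite reduced word `W`
(in the initial segment metric on `F ⊔ ∂F`). -/
def ConvergesTo (u : ℕ → FreeGroup α) (W : InfWord α) : Prop :=
  Tendsto (fun i => wedgeF W (u i)) atTop atTop

/-- `W` is a fixed infinite word of `φ`: `|W ∧ φ(W_i)| → ∞`. -/
def IsFixedInfWord (φ : FreeGroup α →* FreeGroup α) (W : InfWord α) : Prop :=
  Tendsto (fun i => wedgeF W (φ (wordPrefix W i))) atTop atTop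

/-- `W` is an attracting fixed word of `φ`: it is fixed and `|W ∧ φ(W_i)| - i → +∞`. -/
def IsAttractingFixedWord (φ : FreeGroup α →* FreeGroup α) (W : InfWord α) : Prop :=
  IsFixedInfWord φ W ∧
    Tendsto (fun i => (wedgeF W (φ (wordPrefix W i)) : ℤ) - (i : ℤ)) atTop atTop

/-- The fixed subgroup of an endomorphism. -/
def fixedSubgroup {G : Type*} [Group G] (φ : G →* G) : Subgroup G where
  carrier := {g | φ g = g}
  one_mem' := map_one φ
  mul_mem' := by
    intro a b ha hb
    simp only [Set.mem_setOf_eq] at *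
    rw [map_mul, ha, hb]
  inv_mem' := by
    intro a ha
    simp only [Set.mem_setOf_eq] at *
    rw [map_inv, ha]

/-- The rank (minimal number of generators) of a subgroup, valued in `ℕ∞`. -/
noncomputable def grpRank {G : Type*} [Group G] (H : Subgroup G) : ℕ∞ :=
  sInf {k : ℕ∞ | ∃ S : Finset G, Subgroup.closure (S : Set G) = H ∧ (S.card : ℕ∞) = k}

/-- Two infinite reduced words are equivalent (w.r.t. `φ`) if `W' = U·W` for some
`U ∈ fix(φ)`, i.e. the reduced products `U·W_i` converge to `W'`. -/
def EquivFixedWords (φ : FreeGroup α →* FreeGroup α) (W W' : InfWord α) : Prop :=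
  ∃ U ∈ fixedSubgroup φ, ConvergesTo (fun i => U * wordPrefix W i) W'

/-- `a(φ)`: the number of equivalence classes of attracting fixed words, in `ℕ∞`. -/
noncomputable def aCard (φ : FreeGroup α →* FreeGroup α) : ℕ∞ :=
  ENat.card (Quot fun (W W' : {W : InfWord α // IsAttractingFixedWord φ W}) =>
    EquivFixedWords φ W.1 W'.1)

/-- The inner automorphism `i_c : g ↦ c g c⁻¹`, as a monoid homomorphism. -/
def innerAut {G : Type*} [Group G] (c : G) : G →* G := (MulAut.conj c).toMonoidHom

/-- Two endomorphisms are similar if `ψ₂ = i_c ∘ ψ₁ ∘ i_c⁻¹` for some `c`. -/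
def Similar {G : Type*} [Group G] (ψ₁ ψ₂ : G →* G) : Prop :=
  ∃ c : G, ψ₂ = ((innerAut c).comp ψ₁).comp (innerAut c⁻¹)

/-- The trace of the endomorphism of `ℤⁿ` induced by `φ` on the abelianization. -/
def abTrace {n : ℕ} (φ : FreeGroup (Fin n) →* FreeGroup (Fin n)) : ℤ :=
  ∑ i : Fin n, Multiplicative.toAdd
    ((FreeGroup.lift fun k => Multiplicative.ofAdd (if k = i then (1 : ℤ) else 0))
      (φ (FreeGroup.of i)))

/-- The constant infinite reduced word `l l l ⋯`. -/
def constWord {α : Type*} (l : Letter α) : InfWord α :=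
  ⟨fun _ => l, fun _ h => by
    have h2 := congrArg Prod.snd h
    simp [linv] at h2⟩

/-- `W` is an attracting fixed point of `φ`: it is fixed, and there is `i₀` such that
every finite or infinite reduced word `V` with `|W ∧ V| ≥ i₀` satisfies
`|W ∧ φᵖ(V)| → ∞` as `p → ∞`. -/
def IsAttractingFixedPoint (φ : FreeGroup α →* FreeGroup α) (W : InfWord α) : Prop :=
  IsFixedInfWord φ W ∧
    ∃ i₀ : ℕ,
      (∀ g : FreeGroup α, i₀ ≤ wedgeF W g →
        Tendsto (fun p => wedgeF W ((⇑φ)^[p] g)) atTop atTop) ∧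
      (∀ V : InfWord α, (i₀ : ℕ∞) ≤ wedgeI W V →
        ∀ Vs : ℕ → InfWord α, Vs 0 = V →
          (∀ p, ConvergesTo (fun i => φ (wordPrefix (Vs p) i)) (Vs (p + 1))) →
          Tendsto (fun p => wedgeI W (Vs p)) atTop atTop)

open scoped Classical in
/-- The initial segment metric. -/
noncomputable def distIS {α : Type*} (W V : InfWord α) : ℝ :=
  if W = V then 0 else 1 / (1 + ((wedgeI W V).toNat : ℝ))


/-!
Write `A = a⁻¹` and `B = b⁻¹`, so that `φ` sends `a ↦ A`, `A ↦ a`, `b ↦ Abb`, `B ↦ BBa`.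

The only cancellation in the image of a reduced word is between the `a` produced by a letter `A`
or `B` and the `A` produced by a following `a` or `b`. Holding back such an `a` until the next
letter is read turns `φ` on reduced words into a two-state transducer whose output is already
reduced (`toWord_map`). Three consequences carry the proof.

* `φ` doubles the number of letters `b^{±1}` of a reduced word. A `g` with `φ g = 1` or
  `φ g = g` is therefore a power of `a`, and `φ (a^n) = a^{-n}` forces `n = 0`.
* The output without the held-back letter is monotone for the prefix order, so for a fixed
  infinite word `W` the output on each prefix of `W` is again a prefix of `W`. Looking at the
  first two letters, `W` must begin with `B`; then the outputs on `B`, iterated, are prefixes of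
  `W` of unbounded length, so there is at most one fixed infinite word (`fixed_unique`).
* On the words `x = B`, `y = Ba` the map is the period-doubling substitution `x ↦ xy`, `y ↦ xx`.
  Its iterates on `x` are nested prefixes of an infinite word, which is the limit of `φ^p(B)`.
  In a prefix of length `i` the count of `x` is at least that of `y`, and replacing `x`, `y` by
  their images lengthens the word by twice the count of `x`; hence
  `|W ∧ φ(W_i)| ≥ 5 i / 3 - 1` (`wedgeF_limitWord`), so the word is attracting.

As `fix(φ)` is trivial, or just by uniqueness of the fixed word, `a(φ) = 1`.
-/

/-! ### The transducer computing `φ` on reduced words -/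

/-- Output of the transducer on the letter `l`. The state `s` says whether a letter `a` is held
back from the previous step; it is either cancelled by `l`, or written before the output of `l`.
The state after reading `l` is `!l.2`: exactly the negative letters leave an `a` held back. -/
def emit (s : Bool) (l : Letter (Fin 2)) : List (Letter (Fin 2)) :=
  if l.1 = 0 then
    (if l.2 then (if s then [] else [(0, false)]) else (if s then [(0, true)] else []))
  else
    (if l.2 then (if s then [] else [(0, false)]) ++ [(1, true), (1, true)]
      else (if s then [(0, true)] else []) ++ [(1, false), (1, false)])

/-- Output of the transducer on a word, from state `s`. The word `e` is what is written at the end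
if a letter is still held back: `e = [a]` gives the reduced form of the image under `φ`, and
`e = []` gives the part of it that no continuation of the input can alter. -/
def transduce (e : List (Letter (Fin 2))) : Bool → List (Letter (Fin 2)) → List (Letter (Fin 2))
  | s, [] => if s then e else []
  | s, l :: L => emit s l ++ transduce e (!l.2) L

/-- `LastOut x y`: when `x` was the last letter read, `y` is a possible last letter written.
This is the invariant showing that the output stays reduced. -/
def LastOut (x y : Letter (Fin 2)) : Prop :=
  (x, y) ∈ [((1, true), (1, true)), ((0, true), (0, false)), ((0, true), (1, false)),
    ((1, false), (1, false)), ((0, false), (1, true)), ((0, false), ((0 : Fin 2), true))]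

instance (x y : Letter (Fin 2)) : Decidable (LastOut x y) := by
  unfold LastOut; infer_instance

/-- The number of letters `b` and `b⁻¹` in a word. -/
abbrev bCount (L : List (Letter (Fin 2))) : ℕ := L.countP fun l => l.1 = 1

/-! ### Prefixes and the wedge lengths -/

lemma le_commonPrefixLength_iff {β : Type*} [DecidableEq β] (n : ℕ) (l₁ l₂ : List β) :
    n ≤ commonPrefixLength l₁ l₂ ↔ n ≤ l₁.length ∧ n ≤ l₂.length ∧ l₁.take n = l₂.take n := by
  induction n generalizing l₁ l₂ with
  | zero => simp
  | succ n ih =>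
    rcases l₁ with _ | ⟨a, l₁⟩ <;> rcases l₂ with _ | ⟨b, l₂⟩ <;>
      simp only [commonPrefixLength, List.length_nil, List.length_cons, List.take_succ_cons,
        List.cons.injEq] <;> try omega
    by_cases h : a = b
    · simp [h, ih]
    · simp [h]

lemma length_prefixList {α : Type*} (W : InfWord α) (i : ℕ) : (prefixList W i).length = i := by
  simp [prefixList]

lemma take_prefixList {α : Type*} (W : InfWord α) {i j : ℕ} (h : i ≤ j) :
    (prefixList W j).take i = prefixList W i := by
  rw [prefixList, ← List.map_take, List.take_range, min_eq_left h, prefixList]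

lemma prefixList_prefix {α : Type*} (W : InfWord α) {i j : ℕ} (h : i ≤ j) :
    prefixList W i <+: prefixList W j := by
  rw [← take_prefixList W h]; exact List.take_prefix _ _

/-- `|W ∧ g| ≥ n` means that `g` and `W` share their first `n` letters. -/
lemma le_wedgeF_iff {α : Type*} [DecidableEq α] (n : ℕ) (W : InfWord α) (g : FreeGroup α) :
    n ≤ wedgeF W g ↔ n ≤ g.toWord.length ∧ g.toWord.take n = prefixList W n := by
  rw [wedgeF, le_commonPrefixLength_iff, length_prefixList]
  constructor
  · rintro ⟨h, -, h'⟩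
    exact ⟨h, by rw [← h', take_prefixList W h]⟩
  · rintro ⟨h, h'⟩
    exact ⟨h, h, by rw [h', take_prefixList W h]⟩

lemma isReduced_prefixList {α : Type*} (W : InfWord α) (i : ℕ) :
    FreeGroup.IsReduced (prefixList W i) := by
  unfold FreeGroup.IsReduced prefixList
  rw [List.isChain_map]
  rw [List.isChain_iff_getElem]
  intro j hj
  simp only [List.getElem_range]
  intro h1
  by_contra h2
  apply W.2 j
  refine Prod.ext h1.symm ?_
  show (W.1 (j+1)).2 = !(W.1 j).2
  revert h2
  cases (W.1 j).2 <;> cases (W.1 (j+1)).2 <;> simp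

lemma toWord_wordPrefix {α : Type*} [DecidableEq α] (W : InfWord α) (i : ℕ) :
    (wordPrefix W i).toWord = prefixList W i := by
  rw [wordPrefix, FreeGroup.toWord_mk, (isReduced_prefixList W i).reduce_eq]

/-! ### Properties of the transducer -/

lemma transduce_append_prefix (e : List (Letter (Fin 2))) (s : Bool) (L M : List (Letter (Fin 2))) :
    transduce [] s L <+: transduce e s (L ++ M) := by
  induction L generalizing s with
  | nil => simp [transduce]
  | cons l L ih => exact (List.prefix_append_right_inj _).2 (ih _)

lemma transduce_prefix_transduce (e : List (Letter (Fin 2))) (s : Bool) {L M : List (Letter (Fin 2))}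
    (h : L <+: M) : transduce [] s L <+: transduce e s M := by
  obtain ⟨t, rfl⟩ := h
  exact transduce_append_prefix e s L t

lemma length_transduce_le (e : List (Letter (Fin 2))) (s : Bool) (L : List (Letter (Fin 2))) :
    (transduce e s L).length ≤ (transduce [] s L).length + e.length := by
  induction L generalizing s with
  | nil => cases s <;> simp [transduce]
  | cons l L ih => simp only [transduce, List.length_append]; have := ih (!l.2); omega

lemma bCount_transduce (s : Bool) (L : List (Letter (Fin 2))) :
    bCount (transduce [] s L) = 2 * bCount L := by
  induction L generalizing s with
  | nil => cases s <;> rfl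
  | cons l L ih =>
    have h : bCount (emit s l) = 2 * if l.1 = 1 then 1 else 0 := by
      revert s l; decide
    simp only [bCount, transduce, List.countP_append, List.countP_cons, decide_eq_true_eq] at h ih ⊢
    rw [ih, h]; omega

/-- One step of the transducer neither creates a cancellation nor breaks the invariant. -/
lemma emit_spec : ∀ x y z : Letter (Fin 2), LastOut x y → (x.1 = z.1 → x.2 = z.2) →
    (y :: emit (!x.2) z).IsChain (fun a b => a.1 = b.1 → a.2 = b.2) ∧
      LastOut z ((y :: emit (!x.2) z).getLast (by simp)) := by
  decide

lemma isReduced_transduce (x y : Letter (Fin 2)) (L : List (Letter (Fin 2))) (hxy : LastOut x y)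
    (hL : FreeGroup.IsReduced (x :: L)) : FreeGroup.IsReduced (y :: transduce [(0, true)] (!x.2) L) := by
  induction L generalizing x y with
  | nil => revert x y; unfold FreeGroup.IsReduced; decide
  | cons z L ih =>
    have hL' := List.isChain_cons_cons.1 hL
    obtain ⟨h1, h2⟩ := emit_spec x y z hxy hL'.1
    have h3 := ih z _ h2 hL'.2
    have hsplit := List.dropLast_concat_getLast (l := y :: emit (!x.2) z) (by simp)
    have : y :: transduce [(0, true)] (!x.2) (z :: L) = (y :: emit (!x.2) z).dropLast ++
        (y :: emit (!x.2) z).getLast (by simp) :: transduce [(0, true)] (!z.2) L := by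
      rw [transduce, ← List.cons_append]
      conv_lhs => rw [← hsplit]
      simp
    rw [this]
    refine List.isChain_split.2 ⟨?_, h3⟩
    rw [hsplit]; exact h1

/-- The initial state needs no previous letter: it agrees with the state after a fictitious `b`
or `a`, at least one of which does not cancel with the first letter of `L`. -/
lemma isReduced_transduce_start (L : List (Letter (Fin 2))) (hL : FreeGroup.IsReduced L) :
    FreeGroup.IsReduced (transduce [(0, true)] false L) := by
  by_cases h : FreeGroup.IsReduced ((1, true) :: L)
  · exact (isReduced_transduce (1, true) (1, true) L (by decide) h).tail
  · have h' : FreeGroup.IsReduced ((0, true) :: L) := by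
      rcases L with _ | ⟨l, L⟩
      · exact FreeGroup.IsReduced.singleton
      · refine List.isChain_cons_cons.2 ⟨fun h0 => ?_, hL⟩
        refine absurd (List.isChain_cons_cons.2 ⟨fun h1 => ?_, hL⟩) h
        rw [← h0] at h1; exact absurd h1 (by decide)
    exact (isReduced_transduce (0, true) (0, false) L (by decide) h').tail

section

variable (φ : FreeGroup (Fin 2) →* FreeGroup (Fin 2))

/-- One step of the transducer, as an identity in the free group: the held-back letter after the
step is on the left-hand side, the one before it on the right-hand side. -/
lemma mk_emit (ha : φ (FreeGroup.of 0) = (FreeGroup.of 0)⁻¹)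
    (hb : φ (FreeGroup.of 1) = (FreeGroup.of 0)⁻¹ * FreeGroup.of 1 ^ 2)
    (s : Bool) (l : Letter (Fin 2)) :
    FreeGroup.mk (emit s l) * (if !l.2 then FreeGroup.of 0 else 1) =
      (if s then FreeGroup.of 0 else 1) * φ (FreeGroup.mk [l]) := by
  have e1 : ∀ i : Fin 2, FreeGroup.mk [(i, true)] = FreeGroup.of i := fun _ => rfl
  have e2 : ∀ i : Fin 2, FreeGroup.mk [(i, false)] = (FreeGroup.of i)⁻¹ := fun _ => rfl
  have e3 : ∀ (x : Letter (Fin 2)) L, FreeGroup.mk (x :: L) =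
    FreeGroup.mk [x] * FreeGroup.mk L := fun _ _ => rfl
  have e4 : FreeGroup.mk ([] : List (Letter (Fin 2))) = 1 := rfl
  obtain ⟨i, b⟩ := l
  fin_cases i <;> cases b <;> cases s <;>
    simp [emit, e1, e2, e3 _ (_ :: _), e4, ha, hb, pow_two, mul_assoc]

lemma mk_transduce (ha : φ (FreeGroup.of 0) = (FreeGroup.of 0)⁻¹)
    (hb : φ (FreeGroup.of 1) = (FreeGroup.of 0)⁻¹ * FreeGroup.of 1 ^ 2)
    (s : Bool) (L : List (Letter (Fin 2))) :
    FreeGroup.mk (transduce [(0, true)] s L) =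
      (if s then FreeGroup.of 0 else 1) * φ (FreeGroup.mk L) := by
  induction L generalizing s with
  | nil =>
    rw [← FreeGroup.one_eq_mk, map_one, mul_one]
    cases s <;> rfl
  | cons l L ih =>
    have : FreeGroup.mk (l :: L) = FreeGroup.mk [l] * FreeGroup.mk L := rfl
    rw [this, map_mul, ← mul_assoc, ← mk_emit φ ha hb, mul_assoc, ← ih, transduce, FreeGroup.mul_mk]

/-- The transducer computes the reduced form of `φ g`. -/
lemma toWord_map (ha : φ (FreeGroup.of 0) = (FreeGroup.of 0)⁻¹)
    (hb : φ (FreeGroup.of 1) = (FreeGroup.of 0)⁻¹ * FreeGroup.of 1 ^ 2)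
    (g : FreeGroup (Fin 2)) : (φ g).toWord = transduce [(0, true)] false g.toWord := by
  have h := mk_transduce φ ha hb false g.toWord
  rw [FreeGroup.mk_toWord] at h
  simp only [Bool.false_eq_true, if_false, one_mul] at h
  rw [← h, FreeGroup.toWord_mk, (isReduced_transduce_start _ FreeGroup.isReduced_toWord).reduce_eq]

lemma bCount_map (ha : φ (FreeGroup.of 0) = (FreeGroup.of 0)⁻¹)
    (hb : φ (FreeGroup.of 1) = (FreeGroup.of 0)⁻¹ * FreeGroup.of 1 ^ 2)
    (g : FreeGroup (Fin 2)) : 2 * bCount g.toWord ≤ bCount (φ g).toWord := by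
  rw [toWord_map φ ha hb, ← bCount_transduce false]
  exact ((transduce_prefix_transduce _ _ (List.prefix_refl _)).sublist).countP_le

end

lemma exists_zpow_of_bCount (g : FreeGroup (Fin 2)) (h : bCount g.toWord = 0) :
    ∃ n : ℤ, g = FreeGroup.of 0 ^ n := by
  have key : ∀ L : List (Letter (Fin 2)), bCount L = 0 →
      ∃ n : ℤ, FreeGroup.mk L = FreeGroup.of 0 ^ n := by
    intro L hL
    induction L with
    | nil => exact ⟨0, rfl⟩
    | cons l L ih =>
      obtain ⟨i, b⟩ := l
      simp only [bCount, List.countP_cons, decide_eq_true_eq] at hL ih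
      obtain ⟨n, hn⟩ := ih (by omega)
      have hi : i = 0 := by
        by_contra hi
        have : i = 1 := by omega
        simp [this] at hL
      subst hi
      have e : FreeGroup.mk ((0, b) :: L) = FreeGroup.mk [(0, b)] * FreeGroup.mk L := rfl
      cases b
      · exact ⟨-1 + n, by rw [e, hn, zpow_add, zpow_neg_one]; rfl⟩
      · exact ⟨1 + n, by rw [e, hn, zpow_add, zpow_one]; rfl⟩
  obtain ⟨n, hn⟩ := key _ h
  exact ⟨n, by rw [← hn, FreeGroup.mk_toWord]⟩

lemma zpow_of_inj {m n : ℤ} (h : FreeGroup.of (0 : Fin 2) ^ m = FreeGroup.of 0 ^ n) : m = n := by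
  have := congrArg (FreeGroup.lift fun _ : Fin 2 => Multiplicative.ofAdd (1 : ℤ)) h
  simpa [← ofAdd_zsmul] using this

/-! ### The period-doubling word -/

/-- The period-doubling substitution `x ↦ xy`, `y ↦ xx`, with `x = false` and `y = true`. -/
def pdSubst (M : List Bool) : List Bool :=
  M.flatMap fun m => if m then [false, false] else [false, true]

/-- The word in `F₂` obtained by `x ↦ b⁻¹`, `y ↦ b⁻¹a`. -/
def expand (M : List Bool) : List (Letter (Fin 2)) :=
  M.flatMap fun m => if m then [(1, false), (0, true)] else [(1, false)]

/-- The reduced form of `φ^p(b⁻¹)`. -/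
def approx (p : ℕ) : List (Letter (Fin 2)) := expand (pdSubst^[p] [false])

lemma pdSubst_mono {M N : List Bool} (h : M <+: N) : pdSubst M <+: pdSubst N := by
  obtain ⟨t, rfl⟩ := h
  exact ⟨pdSubst t, by simp [pdSubst]⟩

lemma expand_mono {M N : List Bool} (h : M <+: N) : expand M <+: expand N := by
  obtain ⟨t, rfl⟩ := h
  exact ⟨expand t, by simp [expand]⟩

lemma length_iterate_pdSubst (p : ℕ) : (pdSubst^[p] [false]).length = 2 ^ p := by
  induction p with
  | zero => rfl
  | succ p ih =>
    rw [Function.iterate_succ_apply', pow_succ, ← ih]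
    generalize pdSubst^[p] [false] = M
    clear ih
    induction M with
    | nil => rfl
    | cons m M ih =>
      simp only [pdSubst, List.flatMap_cons, List.length_append, List.length_cons] at ih ⊢
      rw [ih]; cases m <;> simp <;> omega

lemma length_expand (M : List Bool) :
    (expand M).length = M.count false + 2 * M.count true := by
  induction M with
  | nil => rfl
  | cons m M ih =>
    simp only [expand, List.flatMap_cons, List.length_append] at ih ⊢
    rw [ih]; cases m <;> simp <;> omega

lemma length_expand_pdSubst (M : List Bool) :
    (expand (pdSubst M)).length = 3 * M.count false + 2 * M.count true := by
  induction M with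
  | nil => rfl
  | cons m M ih =>
    simp only [expand, pdSubst, List.flatMap_cons, List.flatMap_append, List.length_append] at ih ⊢
    rw [ih]; cases m <;> simp <;> omega

lemma lt_length_approx (p : ℕ) : p < (approx p).length := by
  have h1 := length_iterate_pdSubst p
  have h2 : ∀ M : List Bool, M.length ≤ (expand M).length := by
    intro M
    induction M with
    | nil => simp
    | cons m M ih =>
      simp only [expand, List.flatMap_cons, List.length_append, List.length_cons] at ih ⊢
      cases m <;> simp only [if_true, if_false, Bool.false_eq_true, List.length_cons,
        List.length_nil] <;> omega
  have h3 := h2 (pdSubst^[p] [false])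
  have h4 : p < 2 ^ p := Nat.lt_two_pow_self
  unfold approx; omega

lemma approx_mono {p q : ℕ} (h : p ≤ q) : approx p <+: approx q := by
  have key : ∀ p, pdSubst^[p] [false] <+: pdSubst^[p + 1] [false] := by
    intro p
    induction p with
    | zero => exact ⟨[true], rfl⟩
    | succ p ih =>
      rw [Function.iterate_succ_apply', Function.iterate_succ_apply' _ (p + 1)]
      exact pdSubst_mono ih
  induction h with
  | refl => exact List.prefix_refl _
  | step _ ih => exact ih.trans (expand_mono (key _))

lemma mem_expand {M : List Bool} {l : Letter (Fin 2)} (h : l ∈ expand M) :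
    l = (1, false) ∨ l = (0, true) := by
  obtain ⟨m, -, hm⟩ := List.mem_flatMap.1 h
  cases m <;> simp at hm <;> tauto

lemma isReduced_expand (M : List Bool) : FreeGroup.IsReduced (expand M) := by
  refine List.isChain_iff_getElem.2 fun i hi => ?_
  rcases mem_expand (List.getElem_mem (l := expand M) (n := i) (by omega)) with h | h <;>
    rcases mem_expand (List.getElem_mem (l := expand M) (n := i + 1) hi) with h' | h' <;>
    simp [h, h']

lemma toWord_mk_expand (M : List Bool) : (FreeGroup.mk (expand M)).toWord = expand M := by
  rw [FreeGroup.toWord_mk, (isReduced_expand M).reduce_eq]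

/-- The limit of the nested words `approx p`. Its `n`-th letter can be read off `approx n`, which
has more than `n` letters. -/
def limitWord : InfWord (Fin 2) :=
  ⟨fun n => (approx n)[n]'(lt_length_approx n), fun i => by
    rcases mem_expand (List.getElem_mem (lt_length_approx i)) with h | h <;>
      rcases mem_expand (List.getElem_mem (lt_length_approx (i + 1))) with h' | h' <;>
      beta_reduce <;> rw [h, h'] <;> decide⟩

lemma approx_eq_prefixList (p : ℕ) :
    approx p = prefixList limitWord (approx p).length := by
  refine List.ext_getElem (length_prefixList _ _).symm fun i h1 _ => ?_
  simp only [prefixList, List.getElem_map, List.getElem_range, limitWord]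
  rcases le_total i p with h | h
  · exact ((approx_mono h).getElem (lt_length_approx i)).symm
  · exact (approx_mono h).getElem h1

lemma prefixList_limitWord (i : ℕ) : prefixList limitWord i <+: approx i := by
  rw [approx_eq_prefixList i]
  exact prefixList_prefix _ (lt_length_approx i).le

/-- A prefix of an expanded word is an expanded word, since cutting `y = b⁻¹a` in the middle leaves
`x = b⁻¹`. For a word in the image of the substitution, the first, third, fifth, … block is `x`, so
`x` occurs at least as often as `y` in each prefix. -/
lemma exists_expand_of_prefix (M : List Bool) (K : List (Letter (Fin 2)))
    (h : K <+: expand (pdSubst M)) : ∃ N, K = expand N ∧ N.count true ≤ N.count false := by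
  induction M generalizing K with
  | nil => exact ⟨[], List.prefix_nil.1 h, le_rfl⟩
  | cons m M ih =>
    cases m
    · have h₀ : K <+: (1, false) :: (1, false) :: (0, true) :: expand (pdSubst M) := h
      rcases List.prefix_cons_iff.1 h₀ with rfl | ⟨K, rfl, h₁⟩
      · exact ⟨[], rfl, le_rfl⟩
      rcases List.prefix_cons_iff.1 h₁ with rfl | ⟨K, rfl, h₂⟩
      · exact ⟨[false], rfl, by decide⟩
      rcases List.prefix_cons_iff.1 h₂ with rfl | ⟨K, rfl, h₃⟩
      · exact ⟨[false, false], rfl, by decide⟩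
      obtain ⟨N, rfl, hN⟩ := ih K h₃
      exact ⟨false :: true :: N, rfl, by simp; omega⟩
    · have h₀ : K <+: (1, false) :: (1, false) :: expand (pdSubst M) := h
      rcases List.prefix_cons_iff.1 h₀ with rfl | ⟨K, rfl, h₁⟩
      · exact ⟨[], rfl, le_rfl⟩
      rcases List.prefix_cons_iff.1 h₁ with rfl | ⟨K, rfl, h₂⟩
      · exact ⟨[false], rfl, by decide⟩
      obtain ⟨N, rfl, hN⟩ := ih K h₂
      exact ⟨false :: false :: N, rfl, by simp; omega⟩

section

variable (φ : FreeGroup (Fin 2) →* FreeGroup (Fin 2))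

/-- `φ` acts as the period-doubling substitution on `x = b⁻¹` and `y = b⁻¹a`. -/
lemma map_expand (ha : φ (FreeGroup.of 0) = (FreeGroup.of 0)⁻¹)
    (hb : φ (FreeGroup.of 1) = (FreeGroup.of 0)⁻¹ * FreeGroup.of 1 ^ 2) (M : List Bool) :
    φ (FreeGroup.mk (expand M)) = FreeGroup.mk (expand (pdSubst M)) := by
  induction M with
  | nil => exact map_one φ
  | cons m M ih =>
    have e2 : FreeGroup.mk [((1 : Fin 2), false)] = (FreeGroup.of 1)⁻¹ := rfl
    cases m
    · have e : FreeGroup.mk (expand (false :: M)) =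
        (FreeGroup.of 1)⁻¹ * FreeGroup.mk (expand M) := rfl
      have e' : FreeGroup.mk (expand (pdSubst (false :: M))) =
        (FreeGroup.of 1)⁻¹ * ((FreeGroup.of 1)⁻¹ * (FreeGroup.of 0 *
          FreeGroup.mk (expand (pdSubst M)))) := rfl
      rw [e, e', map_mul, ih, map_inv, hb]; group
    · have e : FreeGroup.mk (expand (true :: M)) =
        (FreeGroup.of 1)⁻¹ * (FreeGroup.of 0 * FreeGroup.mk (expand M)) := rfl
      have e' : FreeGroup.mk (expand (pdSubst (true :: M))) =
        (FreeGroup.of 1)⁻¹ * ((FreeGroup.of 1)⁻¹ * FreeGroup.mk (expand (pdSubst M))) := rfl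
      rw [e, e', map_mul, map_mul, ih, map_inv, hb, ha]; group

lemma iterate_eq_mk_approx (ha : φ (FreeGroup.of 0) = (FreeGroup.of 0)⁻¹)
    (hb : φ (FreeGroup.of 1) = (FreeGroup.of 0)⁻¹ * FreeGroup.of 1 ^ 2) (p : ℕ) :
    (⇑φ)^[p] (FreeGroup.of 1)⁻¹ = FreeGroup.mk (approx p) := by
  induction p with
  | zero => rfl
  | succ p ih =>
    rw [Function.iterate_succ_apply', ih, approx, approx, Function.iterate_succ_apply' pdSubst]
    exact map_expand φ ha hb _

lemma transduce_expand (ha : φ (FreeGroup.of 0) = (FreeGroup.of 0)⁻¹)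
    (hb : φ (FreeGroup.of 1) = (FreeGroup.of 0)⁻¹ * FreeGroup.of 1 ^ 2) (M : List Bool) :
    transduce [(0, true)] false (expand M) = expand (pdSubst M) := by
  rw [← toWord_mk_expand (pdSubst M), ← map_expand φ ha hb, toWord_map φ ha hb, toWord_mk_expand]

/-- The quantitative form of attraction: `|W ∧ φ(W_i)| ≥ 5 i / 3 - 1`. -/
lemma wedgeF_limitWord (ha : φ (FreeGroup.of 0) = (FreeGroup.of 0)⁻¹)
    (hb : φ (FreeGroup.of 1) = (FreeGroup.of 0)⁻¹ * FreeGroup.of 1 ^ 2) (i : ℕ) :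
    5 * i ≤ 3 * wedgeF limitWord (φ (wordPrefix limitWord i)) + 3 := by
  have h1 : (transduce [] false (prefixList limitWord i)).length ≤
      wedgeF limitWord (φ (wordPrefix limitWord i)) := by
    have hp : transduce [] false (prefixList limitWord i) <+: approx (i + 1) := by
      have := transduce_prefix_transduce [(0, true)] false (prefixList_limitWord i)
      rwa [approx, transduce_expand φ ha hb, ← Function.iterate_succ_apply' pdSubst] at this
    have hq : transduce [] false (prefixList limitWord i) <+:
        (φ (wordPrefix limitWord i)).toWord := by
      rw [toWord_map φ ha hb, toWord_wordPrefix]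
      exact transduce_prefix_transduce _ _ (List.prefix_refl _)
    rw [le_wedgeF_iff]
    refine ⟨hq.length_le, ?_⟩
    rw [← List.prefix_iff_eq_take.1 hq, ← take_prefixList _ hp.length_le,
      ← approx_eq_prefixList, ← List.prefix_iff_eq_take.1 hp]
  have hK : prefixList limitWord i <+: expand (pdSubst (pdSubst^[i] [false])) := by
    rw [← Function.iterate_succ_apply' pdSubst]
    exact (prefixList_limitWord i).trans (approx_mono (Nat.le_succ i))
  obtain ⟨N, hN, hc⟩ := exists_expand_of_prefix _ _ hK
  have h2 := length_transduce_le [(0, true)] false (prefixList limitWord i)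
  have h3 := length_prefixList limitWord i
  rw [hN, transduce_expand φ ha hb, length_expand_pdSubst, List.length_singleton] at h2
  rw [hN, length_expand] at h3
  rw [hN] at h1
  omega

lemma isAttracting_limitWord (ha : φ (FreeGroup.of 0) = (FreeGroup.of 0)⁻¹)
    (hb : φ (FreeGroup.of 1) = (FreeGroup.of 0)⁻¹ * FreeGroup.of 1 ^ 2) :
    IsAttractingFixedWord φ limitWord := by
  constructor
  · refine tendsto_atTop.2 fun n => ?_
    filter_upwards [eventually_ge_atTop (n + 3)] with i hi
    have := wedgeF_limitWord φ ha hb i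
    omega
  · refine tendsto_atTop.2 fun n => ?_
    filter_upwards [eventually_ge_atTop (2 * n.toNat + 3)] with i hi
    have := wedgeF_limitWord φ ha hb i
    omega

/-! ### Uniqueness of the fixed infinite word -/

/-- The output, without held-back letter, on a prefix of a fixed infinite word `W` is a prefix of `W`. -/
lemma transduce_prefixList_of_fixed (ha : φ (FreeGroup.of 0) = (FreeGroup.of 0)⁻¹)
    (hb : φ (FreeGroup.of 1) = (FreeGroup.of 0)⁻¹ * FreeGroup.of 1 ^ 2)
    {W : InfWord (Fin 2)} (hW : IsFixedInfWord φ W) (i : ℕ) :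
    transduce [] false (prefixList W i) =
      prefixList W (transduce [] false (prefixList W i)).length := by
  obtain ⟨j, hj, hij⟩ := ((tendsto_atTop.1 hW (transduce [] false (prefixList W i)).length).and
    (eventually_ge_atTop i)).exists
  have hq : transduce [] false (prefixList W i) <+: (φ (wordPrefix W j)).toWord := by
    rw [toWord_map φ ha hb, toWord_wordPrefix]
    exact transduce_prefix_transduce _ _ (prefixList_prefix W hij)
  rw [← ((le_wedgeF_iff _ _ _).1 hj).2]
  exact List.prefix_iff_eq_take.1 hq

/-- For any other first letter, the output on the first two letters of `W` starts with a letter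
different from the first one. -/
lemma fixed_start (ha : φ (FreeGroup.of 0) = (FreeGroup.of 0)⁻¹)
    (hb : φ (FreeGroup.of 1) = (FreeGroup.of 0)⁻¹ * FreeGroup.of 1 ^ 2)
    {W : InfWord (Fin 2)} (hW : IsFixedInfWord φ W) : W.1 0 = (1, false) := by
  have h := transduce_prefixList_of_fixed φ ha hb hW 2
  have hr := W.2 0
  have e : prefixList W 2 = [W.1 0, W.1 1] := rfl
  rw [e] at h
  have h0 := congrArg List.head? h
  have key : ∀ x y : Letter (Fin 2), y ≠ linv x → x ≠ (1, false) →
      ∃ z t, z ≠ x ∧ transduce [] false [x, y] = z :: t := by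
    intro x y
    obtain ⟨i, b⟩ := x
    obtain ⟨j, c⟩ := y
    fin_cases i <;> fin_cases j <;> cases b <;> cases c <;> simp [transduce, emit, linv]
  by_contra hne
  obtain ⟨z, t, hz, hzt⟩ := key _ _ hr hne
  rw [hzt] at h0
  rw [List.length_cons, prefixList, List.range_succ_eq_map] at h0
  simp at h0
  exact hz h0

/-- Starting from the common first letter `b⁻¹`, the outputs on common prefixes are again common
prefixes, and each contains twice as many letters `b^{±1}` as the one before. -/
lemma fixed_unique (ha : φ (FreeGroup.of 0) = (FreeGroup.of 0)⁻¹)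
    (hb : φ (FreeGroup.of 1) = (FreeGroup.of 0)⁻¹ * FreeGroup.of 1 ^ 2)
    {W V : InfWord (Fin 2)} (hW : IsFixedInfWord φ W) (hV : IsFixedInfWord φ V) : W = V := by
  have key : ∀ p, ∃ i, 2 ^ p ≤ i ∧ prefixList W i = prefixList V i ∧
      2 ^ p ≤ bCount (prefixList W i) := by
    intro p
    induction p with
    | zero =>
      have e : ∀ U : InfWord (Fin 2), prefixList U 1 = [U.1 0] := fun _ => rfl
      refine ⟨1, le_rfl, ?_, ?_⟩
      · rw [e, e, fixed_start φ ha hb hW, fixed_start φ ha hb hV]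
      · rw [e, fixed_start φ ha hb hW]; decide
    | succ p ih =>
      obtain ⟨i, -, h1, h2⟩ := ih
      have hw := transduce_prefixList_of_fixed φ ha hb hW i
      have hv := transduce_prefixList_of_fixed φ ha hb hV i
      have hc := bCount_transduce false (prefixList W i)
      have hl : bCount (transduce [] false (prefixList W i)) ≤ _ := List.countP_le_length
      refine ⟨(transduce [] false (prefixList W i)).length, ?_, ?_, ?_⟩
      · rw [pow_succ]; omega
      · rw [← hw, h1, ← hv]
      · rw [← hw, pow_succ]; omega
  refine Subtype.ext (funext fun n => ?_)
  obtain ⟨i, hi, h, -⟩ := key n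
  have hn : n < i := lt_of_lt_of_le Nat.lt_two_pow_self hi
  have := congrArg (fun l => l[n]?) h
  simpa [prefixList, hn] using this

end

/-- Example 6.4: for `φ(a) = a⁻¹`, `φ(b) = a⁻¹ b²` on `F₂`,
`φ` is injective, `fix(φ)` is trivial, `a(φ) = 1`, and a representative attracting
fixed word is the limit of the iterates `φᵖ(b⁻¹)`. -/
theorem stmt17 (φ : FreeGroup (Fin 2) →* FreeGroup (Fin 2))
    (ha : φ (FreeGroup.of 0) = (FreeGroup.of 0)⁻¹)
    (hb : φ (FreeGroup.of 1) = (FreeGroup.of 0)⁻¹ * FreeGroup.of 1 ^ 2) :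
    Function.Injective φ ∧
    fixedSubgroup φ = ⊥ ∧
    aCard φ = 1 ∧
    (∃ W : InfWord (Fin 2), IsAttractingFixedWord φ W ∧
      ConvergesTo (fun p => (⇑φ)^[p] (FreeGroup.of 1)⁻¹) W) := by
  refine ⟨?_, ?_, ?_, limitWord, isAttracting_limitWord φ ha hb, ?_⟩
  · rw [injective_iff_map_eq_one]
    intro g hg
    have h := bCount_map φ ha hb g
    rw [hg, FreeGroup.toWord_one] at h
    replace h : 2 * bCount g.toWord ≤ 0 := h
    obtain ⟨n, rfl⟩ := exists_zpow_of_bCount g (by omega)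
    rw [map_zpow, ha, inv_zpow', ← zpow_zero (FreeGroup.of 0)] at hg
    have := zpow_of_inj hg
    rw [show n = 0 by omega, zpow_zero]
  · rw [eq_bot_iff]
    intro g hg
    have hg : φ g = g := hg
    have h := bCount_map φ ha hb g
    rw [hg] at h
    obtain ⟨n, rfl⟩ := exists_zpow_of_bCount g (by omega)
    rw [map_zpow, ha, inv_zpow'] at hg
    have := zpow_of_inj hg
    rw [show n = 0 by omega, zpow_zero]
    exact Subgroup.mem_bot.2 rfl
  · rw [aCard, ENat.card_eq_one_iff_unique]
    refine ⟨⟨⟨Quot.mk _ ⟨limitWord, isAttracting_limitWord φ ha hb⟩⟩, ?_⟩⟩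
    rintro ⟨W, hW⟩
    exact congrArg (Quot.mk _)
      (Subtype.ext (fixed_unique φ ha hb hW.1 (isAttracting_limitWord φ ha hb).1))
  · refine tendsto_atTop.2 fun n => ?_
    filter_upwards [eventually_ge_atTop n] with p hp
    rw [iterate_eq_mk_approx φ ha hb, le_wedgeF_iff, approx, toWord_mk_expand, ← approx]
    have hl := lt_length_approx p
    refine ⟨by omega, ?_⟩
    conv_lhs => rw [approx_eq_prefixList p]
    exact take_prefixList _ (by omega)

end ZZFix
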